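/- For every n ≥ 1 and every degree vector a ∈ ℕ^n, the linear map ∂ = ∂_a on the free vector space F(n) spanned by planar rooted trees with n leaves squares to zero: ∂∘∂ = 0. -/

import Mathlib

/-- Planar rooted trees with leaves decorated by natural numbers (the degrees of
the decorations).  `node cs` has the list `cs` of ordered children. -/
inductive DTree : Type
  | leaf (a : ℕ) : DTree
  | node (children : List DTree) : DTree

namespace DTree

mutual
  /-- degree of a decorated tree: sum of the leaf decorations plus the number of
  vertices (leaves are not vertices, the root of a non-trivial tree is). -/
  def deg : DTree → ℕ
    | leaf a => a
    | node cs => 1 + degList cs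
  def degList : List DTree → ℕ
    | [] => 0
    | c :: rest => deg c + degList rest
end

/-- The weight `W_A` of the vertex at address `p` (list of child indices from the
root): the number of edges of the path `γ` from the root to `A` plus the sum of
the degrees of the subtrees hanging off the path to the left of it. -/
def weightAt : DTree → List ℕ → ℕ
  | _, [] => 0
  | leaf _, _ :: _ => 0
  | node cs, i :: p => 1 + ((cs.take i).map deg).sum + weightAt (cs.getD i (leaf 0)) p

/-- `∂_A t` : merge the vertex at address `p` into its parent (the vertex is
removed and its children are inserted, in order, at its position in the list of
children of its parent). -/
def contractAt : DTree → List ℕ → DTree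
  | t, [] => t
  | leaf a, _ :: _ => leaf a
  | node cs, [i] =>
      match cs.getD i (leaf 0) with
      | node ds => node (cs.take i ++ ds ++ cs.drop (i + 1))
      | leaf _ => node cs
  | node cs, i :: j :: p => node (cs.set i (contractAt (cs.getD i (leaf 0)) (j :: p)))

mutual
  /-- addresses of all vertices of a tree (the root, address `[]`, included when
  the tree is not a leaf; leaves are not vertices). -/
  def vertAddrs : DTree → List (List ℕ)
    | leaf _ => []
    | node cs => [] :: addrsAux cs 0
  def addrsAux : List DTree → ℕ → List (List ℕ)
    | [], _ => []
    | c :: rest, i => (vertAddrs c).map (fun p => i :: p) ++ addrsAux rest (i + 1)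
end

/-- addresses of the inner vertices: all vertices except the root. -/
def innerAddrs : DTree → List (List ℕ)
  | leaf _ => []
  | node cs => addrsAux cs 0

/-- well-formedness: every vertex has at least two children. -/
inductive Good : DTree → Prop
  | leaf (a : ℕ) : Good (leaf a)
  | node (cs : List DTree) : 2 ≤ cs.length → (∀ c ∈ cs, Good c) → Good (node cs)

end DTree

/-- The linear map `∂` on the free vector space on decorated planar rooted
trees, `∂ t = Σ_{A inner vertex of t} (−1)^{W_A} ∂_A t`. -/
noncomputable def treeDelta : (DTree →₀ ℚ) →ₗ[ℚ] (DTree →₀ ℚ) :=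
  Finsupp.lsum ℚ fun t => LinearMap.toSpanSingleton ℚ (DTree →₀ ℚ)
    (((DTree.innerAddrs t).map fun p =>
        ((-1 : ℚ) ^ DTree.weightAt t p) • Finsupp.single (DTree.contractAt t p) (1 : ℚ)).sum)

namespace DTree

section aux
variable {M : Type} [AddCommGroup M] [Module ℚ M]

mutual
  def S1 : DTree → (List DTree → M) → M
    | leaf _, _ => 0
    | node ds, f => - f ds - SL ds (fun x => f [node x])
  def SL : List DTree → (List DTree → M) → M
    | [], _ => 0
    | c :: r, f => S1 c (fun x => f (x ++ r)) + ((-1 : ℚ) ^ deg c) • SL r (fun x => f (c :: x))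
end

mutual
  theorem S1_zero : ∀ (c : DTree), S1 c (fun _ => (0 : M)) = 0
    | leaf _ => by simp [S1]
    | node ds => by simp [S1, SL_zero ds]
  theorem SL_zero : ∀ (c : List DTree), SL c (fun _ => (0 : M)) = 0
    | [] => by simp [SL]
    | c :: r => by simp [SL, S1_zero c, SL_zero r]
end

mutual
  theorem S1_add : ∀ (c : DTree) (f g : List DTree → M),
      S1 c (fun x => f x + g x) = S1 c f + S1 c g
    | leaf _, f, g => by simp [S1]
    | node ds, f, g => by
        simp only [S1]
        rw [SL_add ds (fun x => f [node x]) (fun x => g [node x])]; abel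
  theorem SL_add : ∀ (c : List DTree) (f g : List DTree → M),
      SL c (fun x => f x + g x) = SL c f + SL c g
    | [], f, g => by simp [SL]
    | c :: r, f, g => by
        simp only [SL]
        rw [S1_add c (fun x => f (x ++ r)) (fun x => g (x ++ r)),
          SL_add r (fun x => f (c :: x)) (fun x => g (c :: x)), smul_add]; abel
end

mutual
  theorem S1_smul : ∀ (c : DTree) (a : ℚ) (f : List DTree → M),
      S1 c (fun x => a • f x) = a • S1 c f
    | leaf _, a, f => by simp [S1]
    | node ds, a, f => by
        simp only [S1]
        rw [SL_smul ds a (fun x => f [node x]), smul_sub, smul_neg]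
  theorem SL_smul : ∀ (c : List DTree) (a : ℚ) (f : List DTree → M),
      SL c (fun x => a • f x) = a • SL c f
    | [], a, f => by simp [SL]
    | c :: r, a, f => by
        simp only [SL]
        rw [S1_smul c a (fun x => f (x ++ r)),
          SL_smul r a (fun x => f (c :: x)), smul_add, smul_comm]
end

theorem S1_neg (c : DTree) (f : List DTree → M) : S1 c (fun x => - f x) = - S1 c f := by
  simpa using S1_smul c (-1) f
theorem SL_neg (c : List DTree) (f : List DTree → M) : SL c (fun x => - f x) = - SL c f := by
  simpa using SL_smul c (-1) f
theorem S1_sub (c : DTree) (f g : List DTree → M) :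
    S1 c (fun x => f x - g x) = S1 c f - S1 c g := by
  simp only [sub_eq_add_neg]; rw [S1_add c f (fun x => - g x), S1_neg]
theorem SL_sub (c : List DTree) (f g : List DTree → M) :
    SL c (fun x => f x - g x) = SL c f - SL c g := by
  simp only [sub_eq_add_neg]; rw [SL_add c f (fun x => - g x), SL_neg]

theorem addrs_ne (c : List DTree) (k : ℕ) : ∀ p ∈ addrsAux c k, ∃ j q, p = j :: q := by
  induction c generalizing k with
  | nil => simp [addrsAux]
  | cons c r ih =>
    intro p hp
    simp only [addrsAux, List.mem_append, List.mem_map] at hp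
    rcases hp with ⟨q, _, rfl⟩ | hp
    · exact ⟨_, _, rfl⟩
    · exact ih _ p hp

theorem sum_smul_map {α : Type} (l : List α) (a : ℚ) (g : α → M) :
    (l.map fun p => a • g p).sum = a • (l.map g).sum := by
  induction l with
  | nil => simp
  | cons x l ih => simp [ih, smul_add]

theorem degList_append (x y : List DTree) : degList (x ++ y) = degList x + degList y := by
  induction x with
  | nil => simp [degList]
  | cons c r ih => simp [degList, ih]; ring

theorem degList_eq (x : List DTree) : (x.map deg).sum = degList x := by
  induction x with
  | nil => simp [degList]
  | cons c r ih => simp [degList, ih]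

mutual
  theorem S1_sign : ∀ (c : DTree) (f : List DTree → M),
      S1 c (fun x => ((-1 : ℚ) ^ degList x) • f x) = - ((-1 : ℚ) ^ deg c) • S1 c f
    | leaf _, f => by simp [S1]
    | node ds, f => by
        have h := SL_sign ds (fun x => f [node x])
        have h2 := SL_smul ds (-1) (fun x => ((-1 : ℚ) ^ degList x) • f [node x])
        simp only [S1, degList, deg, pow_add, pow_one, add_zero, mul_smul] at *
        rw [h2, h]; module
  theorem SL_sign : ∀ (c : List DTree) (f : List DTree → M),
      SL c (fun x => ((-1 : ℚ) ^ degList x) • f x) = - ((-1 : ℚ) ^ degList c) • SL c f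
    | [], f => by simp [SL]
    | c :: r, f => by
        have h1 := S1_sign c (fun x => ((-1 : ℚ) ^ degList r) • f (x ++ r))
        have h2 := SL_sign r (fun x => ((-1 : ℚ) ^ deg c) • f (c :: x))
        have h3 := S1_smul c ((-1 : ℚ) ^ degList r) (fun x => f (x ++ r))
        have h4 := SL_smul r ((-1 : ℚ) ^ deg c) (fun x => f (c :: x))
        rw [h3] at h1
        rw [h4] at h2
        simp only [SL, degList, degList_append, pow_add]
        simp only [smul_smul] at h1 h2
        rw [h1]
        simp only [mul_comm ((-1 : ℚ) ^ deg c) _] at h2 ⊢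
        rw [h2]; module
end

mutual
  theorem S1_SL : ∀ (c : DTree) (y : List DTree) (g : List DTree → List DTree → M),
      S1 c (fun z => SL y (fun u => g z u)) = SL y (fun u => S1 c (fun z => g z u))
    | leaf _, y, g => by simp [S1, SL_zero]
    | node ds, y, g => by
        simp only [S1]
        rw [SL_SL ds y (fun x u => g [node x] u), SL_sub, SL_neg]
  theorem SL_SL : ∀ (c : List DTree) (y : List DTree) (g : List DTree → List DTree → M),
      SL c (fun z => SL y (fun u => g z u)) = SL y (fun u => SL c (fun z => g z u))
    | [], y, g => by simp [SL, SL_zero]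
    | c :: r, y, g => by
        simp only [SL]
        rw [S1_SL c y (fun x u => g (x ++ r) u), SL_SL r y (fun x u => g (c :: x) u),
          SL_add, SL_smul]
end

theorem SL_append (x y : List DTree) (f : List DTree → M) :
    SL (x ++ y) f = SL x (fun z => f (z ++ y))
      + ((-1 : ℚ) ^ degList x) • SL y (fun z => f (x ++ z)) := by
  induction x generalizing f with
  | nil => simp [SL, degList]
  | cons c r ih =>
    simp only [List.cons_append, SL, degList, List.append_assoc]
    rw [ih]
    simp only [pow_add, smul_add, smul_smul, add_assoc]

mutual
  theorem S1_sq : ∀ (c : DTree) (f : List DTree → M), S1 c (fun x => SL x f) = 0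
    | leaf _, f => by simp [S1]
    | node ds, f => by
        have h := SL_sq ds (fun x => f [node x])
        simp only [S1, SL, List.append_nil, smul_zero, add_zero]
        rw [SL_sub, SL_neg, h]; simp
  theorem SL_sq : ∀ (c : List DTree) (f : List DTree → M), SL c (fun x => SL x f) = 0
    | [], f => by simp [SL]
    | c :: r, f => by
        have h1 := S1_sq c (fun z => f (z ++ r))
        have h2 := SL_sq r (fun z => f (c :: z))
        have h3 := S1_SL c r (fun z u => f (z ++ u))
        have h4 := S1_sign c (fun z => SL r (fun u => f (z ++ u)))
        simp only [SL, SL_append]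
        rw [S1_add, h1, h4, SL_add, SL_smul, h2, h3]
        module
end

mutual
  theorem link1 : ∀ (c : DTree) (pre r : List DTree) (f : DTree → M),
      ((vertAddrs c).map fun p =>
        ((-1 : ℚ) ^ weightAt (node (pre ++ c :: r)) (pre.length :: p)) •
          f (contractAt (node (pre ++ c :: r)) (pre.length :: p))).sum
      = ((-1 : ℚ) ^ degList pre) • S1 c (fun x => f (node (pre ++ (x ++ r))))
    | leaf _, pre, r, f => by simp [S1, vertAddrs]
    | node ds, pre, r, f => by
        have h := linkL ds [] (fun t => f (node (pre ++ t :: r)))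
        have hne : ∀ p ∈ addrsAux ds 0, ∃ j q, p = j :: q := addrs_ne ds 0
        have e : (addrsAux ds 0).map (fun p =>
            ((-1 : ℚ) ^ weightAt (node (pre ++ node ds :: r)) (pre.length :: p)) •
              f (contractAt (node (pre ++ node ds :: r)) (pre.length :: p)))
            = (addrsAux ds 0).map (fun p => (-(-1 : ℚ) ^ degList pre) •
              (((-1 : ℚ) ^ weightAt (node ds) p) •
                f (node (pre ++ contractAt (node ds) p :: r)))) := by
          apply List.map_congr_left
          intro p hp
          obtain ⟨j, q, rfl⟩ := hne p hp
          rw [weightAt, contractAt]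
          simp [degList_eq, pow_add, smul_smul]
        simp only [List.nil_append, List.length_nil, degList, pow_zero, one_smul] at h
        simp only [vertAddrs, List.map_cons, List.sum_cons, S1]
        rw [e, sum_smul_map, h]
        simp [weightAt, contractAt, degList_eq, pow_add]
        module
  theorem linkL : ∀ (c pre : List DTree) (f : DTree → M),
      ((addrsAux c pre.length).map fun p =>
        ((-1 : ℚ) ^ weightAt (node (pre ++ c)) p) • f (contractAt (node (pre ++ c)) p)).sum
      = ((-1 : ℚ) ^ degList pre) • SL c (fun x => f (node (pre ++ x)))
    | [], pre, f => by simp [SL, addrsAux]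
    | c :: r, pre, f => by
        have h1 := link1 c pre r f
        have h2 := linkL r (pre ++ [c]) f
        simp only [List.append_assoc, List.singleton_append, List.length_append,
          List.length_singleton, degList_append, degList, add_zero, pow_add] at h2
        simp only [addrsAux, List.map_append, List.sum_append, List.map_map, SL,
          Function.comp_def]
        rw [h1, h2]; module
end

mutual
  theorem S1_map {N : Type} [AddCommGroup N] [Module ℚ N] (φ : M →ₗ[ℚ] N) :
      ∀ (c : DTree) (f : List DTree → M), φ (S1 c f) = S1 c (fun x => φ (f x))
    | leaf _, f => by simp [S1]
    | node ds, f => by simp [S1, SL_map φ ds]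
  theorem SL_map {N : Type} [AddCommGroup N] [Module ℚ N] (φ : M →ₗ[ℚ] N) :
      ∀ (c : List DTree) (f : List DTree → M), φ (SL c f) = SL c (fun x => φ (f x))
    | [], f => by simp [SL]
    | c :: r, f => by simp [SL, S1_map φ c, SL_map φ r]
end

end aux

theorem delta_node (cs : List DTree) : treeDelta (Finsupp.single (node cs) (1 : ℚ))
    = SL cs (fun x => Finsupp.single (node x) (1 : ℚ)) := by
  have h := linkL cs [] (fun t => Finsupp.single t (1 : ℚ))
  simp only [List.nil_append, List.length_nil, degList, pow_zero, one_smul] at h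
  rw [← h]
  simp [treeDelta, innerAddrs]
end DTree

/-- Proposition 2.21: the differential `∂` on decorated
planar rooted trees squares to zero: `∂ (∂ t) = 0` for every decorated tree. -/
theorem stmt_13 (t : DTree) (ht : DTree.Good t) :
    treeDelta (treeDelta (Finsupp.single t (1 : ℚ))) = 0 := by
  cases t with
  | leaf a => simp [treeDelta, DTree.innerAddrs]
  | node cs =>
    rw [DTree.delta_node, DTree.SL_map]
    simp only [DTree.delta_node]
    exact DTree.SL_sq cs _
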